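/- arXiv:2602.03602 — 3 statements merged into one kernel-verified Lean document; each statement's English description precedes it below -/
import Mathlib

section
/- For any multigraph G on n vertices, the adjugate of the Laplacian matrix L(G) equals τ(G)·J, where τ(G) is the number of spanning trees of G and J is the all-ones matrix. -/
open Matrix Finset

/-- `f` is the parent map of a tree rooted at `r`: iterating `f` from any vertex reaches the fixed
point `r`. -/
def IsRootedAt {V : Type*} (f : V → V) (r : V) : Prop :=
  f r = r ∧ ∀ k, ∃ n, f^[n] k = r

namespace IsRootedAt

variable {V : Type*} {f g : V → V} {r : V}

theorem exists_depth (hf : IsRootedAt f r) : ∃ d : V → ℕ, ∀ k, k ≠ r → d (f k) < d k := by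
  classical
  refine ⟨fun k => Nat.find (hf.2 k), fun k hk => ?_⟩
  have hspec := Nat.find_spec (hf.2 k)
  rcases hn : Nat.find (hf.2 k) with _ | n
  · rw [hn] at hspec
    exact absurd hspec hk
  · rw [hn, Function.iterate_succ_apply] at hspec
    exact (Nat.lt_succ_of_le (Nat.find_min' (hf.2 (f k)) hspec)).trans_eq hn.symm

theorem of_depth (hr : f r = r) (d : V → ℕ) (hd : ∀ k, k ≠ r → d (f k) < d k) :
    IsRootedAt f r := by
  refine ⟨hr, fun k => ?_⟩
  induction hk : d k using Nat.strong_induction_on generalizing k with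
  | _ n ih =>
    by_cases h : k = r
    · exact ⟨0, h⟩
    · obtain ⟨m, hm⟩ := ih _ (hk ▸ hd k h) (f k) rfl
      exact ⟨m + 1, hm⟩

theorem apply_ne (hf : IsRootedAt f r) {k : V} (hk : k ≠ r) : f k ≠ k := by
  obtain ⟨d, hd⟩ := hf.exists_depth
  intro h
  have := hd k hk
  rw [h] at this
  exact lt_irrefl _ this

theorem apply_apply_ne (hf : IsRootedAt f r) {k : V} (hk : k ≠ r) : f (f k) ≠ k := by
  obtain ⟨d, hd⟩ := hf.exists_depth
  intro h
  by_cases h' : f k = r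
  · rw [h', hf.1] at h
    exact hk h.symm
  · have h1 := hd k hk
    have h2 := hd (f k) h'
    rw [h] at h2
    exact lt_asymm h1 h2

end IsRootedAt

/-- The graph joining each vertex `k` to its parent `f k`. -/
def parentGraph {V : Type*} (f : V → V) : SimpleGraph V :=
  SimpleGraph.fromRel fun i j => f i = j

section ParentGraph

variable {V : Type*} {f g : V → V} {r : V}

theorem parentGraph_adj {i j : V} :
    (parentGraph f).Adj i j ↔ i ≠ j ∧ (f i = j ∨ f j = i) := Iff.rfl

theorem IsRootedAt.adj_apply (hf : IsRootedAt f r) {k : V} (hk : k ≠ r) :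
    (parentGraph f).Adj k (f k) :=
  ⟨(hf.apply_ne hk).symm, Or.inl rfl⟩

theorem IsRootedAt.connected_parentGraph (hf : IsRootedAt f r) : (parentGraph f).Connected := by
  have key : ∀ n k, f^[n] k = r → (parentGraph f).Reachable k r := by
    intro n
    induction n with
    | zero => rintro k rfl; rfl
    | succ n ih =>
      intro k hk
      by_cases h : k = r
      · rw [h]
      · exact (hf.adj_apply h).reachable.trans (ih (f k) hk)
  have hreach : ∀ k, (parentGraph f).Reachable k r := fun k =>
    let ⟨n, hn⟩ := hf.2 k
    key n k hn
  exact (SimpleGraph.connected_iff _).2 ⟨fun u v => (hreach u).trans (hreach v).symm, ⟨r⟩⟩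

theorem IsRootedAt.ext_of_parentGraph_eq (hf : IsRootedAt f r) (hg : IsRootedAt g r)
    (h : parentGraph f = parentGraph g) : f = g := by
  obtain ⟨d, hd⟩ := hf.exists_depth
  funext k
  induction hk : d k using Nat.strong_induction_on generalizing k with
  | _ n ih =>
    by_cases hkr : k = r
    · rw [hkr, hf.1, hg.1]
    · have hadj := hf.adj_apply hkr
      rw [h, parentGraph_adj] at hadj
      rcases hadj.2 with h' | h'
      · exact h'.symm
      · rw [← ih _ (hk ▸ hd k hkr) (f k) rfl] at h'
        exact absurd h' (hf.apply_apply_ne hkr)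

theorem SimpleGraph.IsTree.exists_parentGraph_eq {T : SimpleGraph V} (hT : T.IsTree) (r : V) :
    ∃ f, IsRootedAt f r ∧ parentGraph f = T := by
  have hstep : ∀ k, ∃ l, (k = r → l = r) ∧ (k ≠ r → T.Adj k l ∧ T.dist l r < T.dist k r) := by
    intro k
    by_cases hk : k = r
    · exact ⟨r, fun _ => rfl, fun h => absurd hk h⟩
    · obtain ⟨p, hp⟩ := hT.connected.exists_walk_length_eq_dist k r
      cases p with
      | nil => exact absurd rfl hk
      | @cons _ l _ hadj q =>
        refine ⟨l, fun h => absurd h hk, fun _ => ⟨hadj, ?_⟩⟩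
        rw [← hp, SimpleGraph.Walk.length_cons]
        exact Nat.lt_succ_of_le (SimpleGraph.dist_le q)
  choose f hfr hfk using hstep
  have hf : IsRootedAt f r :=
    .of_depth (hfr r rfl) (fun k => T.dist k r) fun k hk => (hfk k hk).2
  refine ⟨f, hf, ?_⟩
  have hle : parentGraph f ≤ T := by
    rintro i j ⟨hne, h | h⟩
    · have hi : i ≠ r := fun hi => hne (by rw [← h, hfr i hi, hi])
      exact h ▸ (hfk i hi).1
    · have hj : j ≠ r := fun hj => hne (by rw [← h, hfr j hj, hj])
      exact h ▸ (hfk j hj).1.symm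
  exact le_antisymm hle
    ((SimpleGraph.isTree_iff_minimal_connected.1 hT).2 hf.connected_parentGraph hle)

variable [Fintype V] [DecidableEq V]

theorem IsRootedAt.injOn_edge (hf : IsRootedAt f r) :
    Set.InjOn (fun k => s(k, f k)) ((univ.erase r : Finset V) : Set V) := by
  intro k hk l _ h
  have hk' : k ≠ r := by simpa using hk
  rcases Sym2.eq_iff.1 h with h | h
  · exact h.1
  · exact absurd (h.2 ▸ h.1.symm) (hf.apply_apply_ne hk')

theorem IsRootedAt.edgeFinset_parentGraph (hf : IsRootedAt f r)
    [Fintype (parentGraph f).edgeSet] :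
    (parentGraph f).edgeFinset = (univ.erase r).image fun k => s(k, f k) := by
  ext e
  induction e using Sym2.ind with
  | _ i j =>
    rw [SimpleGraph.mem_edgeFinset, SimpleGraph.mem_edgeSet, parentGraph_adj, mem_image]
    constructor
    · rintro ⟨hne, h | h⟩
      · refine ⟨i, ?_, by rw [h]⟩
        rw [mem_erase]
        exact ⟨fun hi => hne (by rw [← h, hi, hf.1]), mem_univ _⟩
      · refine ⟨j, ?_, by rw [h, Sym2.eq_swap]⟩
        rw [mem_erase]
        exact ⟨fun hj => hne (by rw [← h, hj, hf.1]), mem_univ _⟩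
    · rintro ⟨k, hk, h⟩
      have := hf.adj_apply (ne_of_mem_erase hk)
      rw [← SimpleGraph.mem_edgeSet, h, SimpleGraph.mem_edgeSet] at this
      exact this

theorem IsRootedAt.isTree_parentGraph (hf : IsRootedAt f r) : (parentGraph f).IsTree := by
  classical
  rw [SimpleGraph.isTree_iff_connected_and_card]
  refine ⟨hf.connected_parentGraph, ?_⟩
  rw [Nat.card_eq_fintype_card, ← SimpleGraph.edgeFinset_card, hf.edgeFinset_parentGraph,
    card_image_of_injOn hf.injOn_edge, Nat.card_eq_fintype_card,
    card_erase_add_one (mem_univ r), card_univ]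

end ParentGraph

section Determinant

variable {V R : Type*} [Fintype V] [DecidableEq V] [CommRing R]

/-- The reduced Laplacian of the functional digraph `k ↦ f k`, with the row of the root `r`
replaced by a unit vector. -/
def functionalLaplacian (R : Type*) [CommRing R] (f : V → V) (r : V) : Matrix V V R :=
  fun k => Pi.single k 1 - if k = r then 0 else Pi.single (f k) 1

theorem det_functionalLaplacian_of_isRootedAt {f : V → V} {r : V} (hf : IsRootedAt f r) :
    (functionalLaplacian R f r).det = 1 := by
  obtain ⟨d, hd⟩ := hf.exists_depth
  have hentry : ∀ i j, d i ≤ d j → functionalLaplacian R f r i j = (1 : Matrix V V R) i j := by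
    intro i j hij
    by_cases hi : i = r
    · simp [functionalLaplacian, hi, Matrix.one_apply, Pi.single_apply, eq_comm]
    · have hj : j ≠ f i := fun hj => absurd (hd i hi) (by rw [← hj]; exact not_lt.2 hij)
      simp [functionalLaplacian, hi, hj, Matrix.one_apply, Pi.single_apply, eq_comm]
  have htri : (functionalLaplacian R f r).BlockTriangular (OrderDual.toDual ∘ d) := by
    intro i j hij
    have hij' : d i < d j := hij
    rw [hentry i j hij'.le, Matrix.one_apply_ne]
    rintro rfl
    exact lt_irrefl _ hij'
  rw [htri.det]
  refine prod_eq_one fun a _ => ?_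
  have : (functionalLaplacian R f r).toSquareBlock (OrderDual.toDual ∘ d) a = 1 := by
    ext i j
    have hij : d i = d j := OrderDual.toDual.injective (i.2.trans j.2.symm)
    rw [Matrix.toSquareBlock_def, Matrix.of_apply, hentry _ _ hij.le]
    simp [Matrix.one_apply, Subtype.ext_iff]
  rw [this, det_one]

theorem det_functionalLaplacian_of_not_isRootedAt [IsDomain R] {f : V → V} {r : V}
    (hr : f r = r) (hf : ¬ IsRootedAt f r) : (functionalLaplacian R f r).det = 0 := by
  classical
  rw [← Matrix.exists_mulVec_eq_zero_iff]
  have hstep : ∀ k, k ≠ r → ((∀ n, f^[n] (f k) ≠ r) ↔ ∀ n, f^[n] k ≠ r) := by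
    intro k hk
    refine ⟨fun h n => ?_, fun h n => h (n + 1)⟩
    cases n with
    | zero => exact hk
    | succ n => exact h n
  refine ⟨fun k => if ∀ n, f^[n] k ≠ r then 1 else 0, fun h => hf ⟨hr, fun k => ?_⟩, ?_⟩
  · by_contra! hk
    simpa [hk] using congrFun h k
  · funext k
    by_cases hk : k = r
    · subst hk
      have : ¬ ∀ n, f^[n] k ≠ k := fun h => h 0 rfl
      simp only [functionalLaplacian, Matrix.mulVec, if_true, sub_zero, single_one_dotProduct,
        if_neg this, Pi.zero_apply]
    · simp only [functionalLaplacian, Matrix.mulVec, if_neg hk, sub_dotProduct,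
        single_one_dotProduct, hstep k hk, sub_self, Pi.zero_apply]

/-- The Laplacian of a weight function. -/
def weightedLaplacian (w : V → V → R) : Matrix V V R :=
  Matrix.of fun i j => if i = j then ∑ k, w i k else -w i j

theorem weightedLaplacian_row (w : V → V → R) (hloop : ∀ i, w i i = 0) (i : V) :
    weightedLaplacian w i = ∑ k, w i k • (Pi.single i 1 - Pi.single k 1 : V → R) := by
  funext j
  by_cases h : i = j
  · subst h
    simp [weightedLaplacian, Finset.sum_apply, Pi.single_apply, mul_sub, hloop]
  · simp [weightedLaplacian, Finset.sum_apply, Pi.single_apply, h, Ne.symm h]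

/-- The Matrix-Tree theorem in terms of parent maps. -/
theorem det_weightedLaplacian_updateRow [IsDomain R] (w : V → V → R) (hloop : ∀ i, w i i = 0)
    (r : V) [DecidablePred fun f : V → V => IsRootedAt f r] :
    ((weightedLaplacian w).updateRow r (Pi.single r 1)).det =
      ∑ f : V → V with IsRootedAt f r, ∏ k ∈ univ.erase r, w k (f k) := by
  set c : V → V → R := fun k l => if k = r then (if l = r then 1 else 0) else w k l with hc
  have hrow : (weightedLaplacian w).updateRow r (Pi.single r 1) = fun k => ∑ l, c k l •
      (Pi.single k 1 - if k = r then 0 else Pi.single l 1 : V → R) := by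
    funext k
    by_cases hk : k = r
    · subst hk
      simp [hc]
    · rw [updateRow_ne hk, weightedLaplacian_row w hloop]
      simp [hc, hk]
  have hdet := (detRowAlternating : (V → R) [⋀^V]→ₗ[R] R).toMultilinearMap.map_sum
    (fun k l => c k l • (Pi.single k 1 - if k = r then 0 else Pi.single l 1 : V → R))
  rw [hrow]
  refine hdet.trans ?_
  rw [sum_filter]
  refine sum_congr rfl fun f _ => ?_
  rw [MultilinearMap.map_smul_univ]
  change (∏ k, c k (f k)) • (functionalLaplacian R f r).det = _
  rw [← mul_prod_erase univ _ (mem_univ r)]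
  have hprod : ∏ k ∈ univ.erase r, c k (f k) = ∏ k ∈ univ.erase r, w k (f k) :=
    prod_congr rfl fun k hk => if_neg (ne_of_mem_erase hk)
  rw [hprod]
  split_ifs with hf
  · simp [hc, hf.1, det_functionalLaplacian_of_isRootedAt hf]
  · by_cases hr : f r = r
    · rw [det_functionalLaplacian_of_not_isRootedAt hr hf, smul_zero]
    · simp [hc, hr]

theorem adjugate_weightedLaplacian_apply_eq [IsDomain R] (w : V → V → R)
    (hloop : ∀ i, w i i = 0) (i r : V) :
    (weightedLaplacian w).adjugate i r =
      ((weightedLaplacian w).updateRow r (Pi.single r 1)).det := by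
  rw [adjugate_apply, ← sub_eq_zero]
  have hsplit : (Pi.single i 1 : V → R) = (Pi.single i 1 - Pi.single r 1) + Pi.single r 1 := by
    rw [sub_add_cancel]
  rw [hsplit, det_updateRow_add, add_sub_cancel_right, ← Matrix.exists_mulVec_eq_zero_iff]
  refine ⟨1, fun h => one_ne_zero (congrFun h i), ?_⟩
  funext k
  by_cases hk : k = r
  · subst hk
    rw [Matrix.mulVec, updateRow_self, sub_dotProduct, single_one_dotProduct,
      single_one_dotProduct]
    exact sub_self _
  · rw [Matrix.mulVec, updateRow_ne hk, weightedLaplacian_row w hloop, sum_dotProduct]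
    refine sum_eq_zero fun l _ => ?_
    rw [smul_dotProduct, sub_dotProduct, single_one_dotProduct, single_one_dotProduct]
    simp

theorem sum_isRootedAt_eq_sum_isTree (w : V → V → R) (hsym : ∀ i j, w i j = w j i) (r : V)
    [DecidablePred fun f : V → V => IsRootedAt f r] [Fintype (SimpleGraph V)]
    [DecidablePred fun T : SimpleGraph V => T.IsTree]
    [∀ T : SimpleGraph V, Fintype T.edgeSet] :
    ∑ f : V → V with IsRootedAt f r, ∏ k ∈ univ.erase r, w k (f k) =
      ∑ T : SimpleGraph V with T.IsTree, ∏ e ∈ T.edgeFinset, Sym2.lift ⟨w, hsym⟩ e := by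
  refine sum_bij (fun f _ => parentGraph f) ?_ ?_ ?_ ?_
  · intro f hf
    exact mem_filter.2 ⟨mem_univ _, (mem_filter.1 hf).2.isTree_parentGraph⟩
  · intro f hf g hg h
    exact (mem_filter.1 hf).2.ext_of_parentGraph_eq (mem_filter.1 hg).2 h
  · intro T hT
    obtain ⟨f, hf, h⟩ := (mem_filter.1 hT).2.exists_parentGraph_eq r
    exact ⟨f, mem_filter.2 ⟨mem_univ _, hf⟩, h⟩
  · intro f hf
    have hf' := (mem_filter.1 hf).2
    rw [hf'.edgeFinset_parentGraph, prod_image hf'.injOn_edge]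
    rfl

end Determinant


open scoped Classical

/-- Matrix-Tree Theorem, all-cofactors form: for a loopless multigraph on `N` vertices with
symmetric edge multiplicity function `w`, the adjugate of the Laplacian equals `τ(G)·J`,
where `τ(G)` is the number of spanning trees (sum over spanning trees of the underlying simple
graph of the products of edge multiplicities) and `J` is the all-ones matrix. -/
theorem stmt_7 (N : ℕ) (w : Fin N → Fin N → ℕ)
    (hsym : ∀ i j, w i j = w j i) (hloop : ∀ i, w i i = 0) :
    (Matrix.of fun i j => if i = j then (∑ k, (w i k : ℤ)) else -(w i j : ℤ) : Matrix (Fin N) (Fin N) ℤ).adjugate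
      = ((∑ T ∈ Finset.univ.filter
        (fun T : SimpleGraph (Fin N) =>
          T.IsTree ∧ T ≤ SimpleGraph.fromRel fun i j => w i j ≠ 0),
      ∏ e ∈ T.edgeFinset, Sym2.lift ⟨w, hsym⟩ e : ℕ) : ℤ) • Matrix.of fun _ _ => (1 : ℤ) := by
  have hloop' : ∀ i, ((fun i j => (w i j : ℤ)) i i) = 0 := fun i => by simp [hloop]
  ext i r
  refine (adjugate_weightedLaplacian_apply_eq (fun i j => (w i j : ℤ)) hloop' i r).trans ?_
  rw [det_weightedLaplacian_updateRow _ hloop',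
    sum_isRootedAt_eq_sum_isTree (fun i j => (w i j : ℤ)) (fun i j => by simp [hsym i j]), Matrix.smul_apply,
    Matrix.of_apply, smul_eq_mul, mul_one, ← filter_filter, Nat.cast_sum]
  have hcast : ∀ T : SimpleGraph (Fin N),
      (∏ e ∈ T.edgeFinset, Sym2.lift ⟨fun i j => (w i j : ℤ), fun i j => by simp [hsym i j]⟩ e) =
        ((∏ e ∈ T.edgeFinset, Sym2.lift ⟨w, hsym⟩ e : ℕ) : ℤ) := by
    intro T
    rw [Nat.cast_prod]
    refine prod_congr rfl fun e _ => ?_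
    induction e using Sym2.ind with
    | _ a b => rfl
  simp only [hcast]
  refine (sum_filter_of_ne fun T _ hT => ?_).symm
  intro a b hab
  rw [Nat.cast_ne_zero, prod_ne_zero_iff] at hT
  exact ⟨hab.ne, Or.inl (hT s(a, b) (SimpleGraph.mem_edgeFinset.2 hab))⟩
end

section
/- For a spanning forest F of K_{n_1,...,n_s} with c components, the number of spanning trees of K_{n_1,...,n_s} containing F is τ_F(K_{n_1,...,n_s}) = (C_{ij}/(n_i(n − n_j))) · Π_{p=1}^c α_p, for any i, j ∈ {1,...,s}, where C_{ij} is the (i,j) cofactor of the matrix I_s − (Σ_{p=1}^c n_{jp}(m_p − n_{ip})/α_p)_{s×s}. -/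
open Finset

/-- `m_p = |V(T_p)|`: the number of vertices of `K_{n_1,…,n_s}` lying in the `p`-th component
of a spanning forest, where `comp` sends each vertex to the index of its component. -/
noncomputable def mP {s c : ℕ} (n : Fin s → ℕ) (comp : (Σ i, Fin (n i)) → Fin c)
    (p : Fin c) : ℕ :=
  Nat.card {v : Σ i, Fin (n i) // comp v = p}

/-- `n_{ip} = |X_i ∩ V(T_p)|`: the number of vertices of the `i`-th partition class lying in
the `p`-th component. -/
noncomputable def nIP {s c : ℕ} (n : Fin s → ℕ) (comp : (Σ i, Fin (n i)) → Fin c)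
    (i : Fin s) (p : Fin c) : ℕ :=
  Nat.card {v : Σ i, Fin (n i) // v.1 = i ∧ comp v = p}

/-- `α_p = n·m_p − Σ_i n_i·n_{ip}` (as a real number). -/
noncomputable def alphaR {s c : ℕ} (n : Fin s → ℕ) (comp : (Σ i, Fin (n i)) → Fin c)
    (p : Fin c) : ℝ :=
  (∑ i, (n i : ℝ)) * (mP n comp p) - ∑ i, (n i : ℝ) * (nIP n comp i p)

/-- The matrix `Z(0) = I_s − (Σ_p n_{jp}(m_p − n_{ip})/α_p)_{i,j}`. -/
noncomputable def Zzero {s c : ℕ} (n : Fin s → ℕ) (comp : (Σ i, Fin (n i)) → Fin c) :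
    Matrix (Fin s) (Fin s) ℝ :=
  1 - Matrix.of fun i j =>
    ∑ p, (nIP n comp j p : ℝ) * ((mP n comp p : ℝ) - (nIP n comp i p : ℝ)) / alphaR n comp p

open Matrix

/-- The Laplacian `D - W` of a weight matrix `W`, where `D` is the diagonal matrix of row sums. -/
def weightLaplacian {C : Type*} [Fintype C] [DecidableEq C] (W : Matrix C C ℝ) : Matrix C C ℝ :=
  diagonal (W *ᵥ 1) - W

/-- The matrix with entry `1` at `(f v, v)` for every `v`, and `0` elsewhere. -/
def fiberMatrix {V C : Type*} [DecidableEq C] (f : V → C) : Matrix C V ℝ :=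
  of fun x v => if f v = x then 1 else 0

section Laplacian

variable {V C C' : Type*}

lemma fiberMatrix_comp [Fintype C] [DecidableEq C] [DecidableEq C'] (g : C → C') (f : V → C) :
    fiberMatrix (g ∘ f) = fiberMatrix g * fiberMatrix f := by
  ext x v
  simp [fiberMatrix, mul_apply]

lemma fiberMatrix_transpose_mulVec_one [Fintype C'] [DecidableEq C'] (g : C → C') :
    (fiberMatrix g)ᵀ *ᵥ (1 : C' → ℝ) = 1 := by
  ext x
  simp [fiberMatrix, mulVec, dotProduct]

lemma sum_fiberMatrix_mulVec [Fintype C] [Fintype C'] [DecidableEq C'] (g : C → C')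
    (u : C → ℝ) :
    ∑ x, (fiberMatrix g *ᵥ u) x = ∑ y, u y := by
  simp only [mulVec, dotProduct, fiberMatrix, of_apply]
  rw [sum_comm]
  simp

lemma fiberMatrix_mulVec_single [Fintype V] [DecidableEq V] [DecidableEq C] (f : V → C) (v : V) :
    fiberMatrix f *ᵥ Pi.single v 1 = Pi.single (f v) 1 := by
  ext x
  simp [fiberMatrix, Pi.single_apply, eq_comm]

lemma fiberMatrix_mul_mul_transpose_apply [Fintype V] [DecidableEq C] (f : V → C)
    (A : Matrix V V ℝ) (x y : C) :
    (fiberMatrix f * A * (fiberMatrix f)ᵀ) x y =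
      ∑ v, ∑ w, if f v = x ∧ f w = y then A v w else 0 := by
  simp only [mul_apply, fiberMatrix, of_apply, transpose_apply, sum_mul]
  rw [sum_comm]
  refine sum_congr rfl fun v _ => sum_congr rfl fun w _ => ?_
  by_cases h : f v = x <;> by_cases h' : f w = y <;> simp [h, h']

/-- Merging vertices commutes with forming the Laplacian. -/
lemma weightLaplacian_fiberMatrix [Fintype C] [DecidableEq C] [Fintype C'] [DecidableEq C']
    (g : C → C') (W : Matrix C C ℝ) :
    weightLaplacian (fiberMatrix g * W * (fiberMatrix g)ᵀ) =
      fiberMatrix g * weightLaplacian W * (fiberMatrix g)ᵀ := by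
  have hdiag (d : C → ℝ) :
      fiberMatrix g * diagonal d * (fiberMatrix g)ᵀ = diagonal (fiberMatrix g *ᵥ d) := by
    ext x y
    rw [fiberMatrix_mul_mul_transpose_apply]
    by_cases h : x = y
    · subst h
      simp only [diagonal_apply_eq, mulVec, dotProduct, fiberMatrix, of_apply]
      refine sum_congr rfl fun v _ => ?_
      rw [sum_eq_single v (fun w _ hw => by simp [diagonal_apply_ne' _ hw]) (by simp)]
      by_cases hv : g v = x <;> simp [hv]
    · rw [diagonal_apply_ne _ h]
      refine sum_eq_zero fun v _ => sum_eq_zero fun w _ => ?_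
      split_ifs with hvw
      · exact diagonal_apply_ne _ fun h' => h (by rw [← hvw.1, ← hvw.2, h'])
      · rfl
  rw [weightLaplacian, weightLaplacian, Matrix.mul_sub, Matrix.sub_mul, hdiag, ← mulVec_mulVec,
    ← mulVec_mulVec, fiberMatrix_transpose_mulVec_one]

lemma weightLaplacian_add [Fintype C] [DecidableEq C] (W W' : Matrix C C ℝ) :
    weightLaplacian (W + W') = weightLaplacian W + weightLaplacian W' := by
  ext x y
  by_cases h : x = y <;> simp [weightLaplacian, add_mulVec, h]
  · ring
  · ring

lemma weightLaplacian_eq_zero [Fintype C] [DecidableEq C] (W : Matrix C C ℝ)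
    (hW : ∀ x y, x ≠ y → W x y = 0) :
    weightLaplacian W = 0 := by
  ext x y
  have hx : (W *ᵥ 1) x = W x x := by
    simp only [mulVec, dotProduct, Pi.one_apply, mul_one]
    exact sum_eq_single x (fun y _ hy => hW x y hy.symm) (by simp)
  by_cases h : x = y
  · subst h
    simp [weightLaplacian, hx]
  · simp [weightLaplacian, h, hW]

lemma weightLaplacian_single_add_single [Fintype V] [DecidableEq V] (a b : V) :
    weightLaplacian (single a b (1 : ℝ) + single b a 1) =
      vecMulVec (Pi.single a 1 - Pi.single b 1) (Pi.single a 1 - Pi.single b 1) := by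
  ext x y
  simp only [weightLaplacian, Matrix.sub_apply, Matrix.add_apply, diagonal_apply, add_mulVec,
    Pi.add_apply, vecMulVec_apply, Pi.sub_apply, Pi.single_apply, single_apply, mulVec, dotProduct, Pi.one_apply,
    mul_one]
  have h1 (p q : V) : ∑ k, (if p = x ∧ q = k then (1 : ℝ) else 0) = if x = p then 1 else 0 := by
    by_cases h : p = x
    · simp [h]
    · simp [h, Ne.symm h]
  rw [h1, h1]
  by_cases hxa : x = a <;> by_cases hxb : x = b <;> by_cases hya : y = a <;>
    by_cases hyb : y = b <;> by_cases hxy : x = y <;> subst_vars <;> simp_all [eq_comm]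

end Laplacian

section Contraction

variable {C : Type*} [DecidableEq C]

/-- The map merging the vertex `p` into the vertex `q ≠ p`. -/
def mergeInto (p q : C) (h : q ≠ p) (x : C) : {x // x ≠ p} :=
  if hx : x = p then ⟨q, h⟩ else ⟨x, hx⟩

lemma mergeInto_eq_mergeInto_iff {p q : C} (h : q ≠ p) (x y : C) :
    mergeInto p q h x = mergeInto p q h y ↔ x = y ∨ (x = p ∧ y = q) ∨ (x = q ∧ y = p) := by
  unfold mergeInto
  split_ifs <;> grind

lemma mergeInto_surjective {p q : C} (h : q ≠ p) : Function.Surjective (mergeInto p q h) :=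
  fun x => ⟨x, by simp [mergeInto, x.2]⟩

lemma det_updateRow_single_self [Fintype C] (M : Matrix C C ℝ) (p : C) :
    (M.updateRow p (Pi.single p 1)).det = (M.submatrix (Subtype.val : {x // x ≠ p} → C)
      Subtype.val).det := by
  rw [twoBlockTriangular_det _ (fun x => x ≠ p)]
  · have h1 : (M.updateRow p (Pi.single p 1)).toSquareBlockProp (fun x => x ≠ p) =
        M.submatrix (Subtype.val : {x // x ≠ p} → C) Subtype.val := by
      ext x y
      simp [toSquareBlockProp, updateRow_ne x.2]
    have h2 : (M.updateRow p (Pi.single p 1)).toSquareBlockProp (fun x => ¬ x ≠ p) = 1 := by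
      ext ⟨x, hx⟩ ⟨y, hy⟩
      obtain rfl : x = p := not_not.1 hx
      obtain rfl : y = x := not_not.1 hy
      simp [toSquareBlockProp]
    rw [h1, h2, det_one, mul_one]
  · intro i hi j hj
    obtain rfl := not_not.1 hi
    simp [hj]

/-- The determinant form of deletion and contraction for the edge joining `p` and `q`. -/
lemma det_add_vecMulVec_single_sub_single [Fintype C] (M : Matrix C C ℝ) {p q : C}
    (h : q ≠ p) :
    (M + vecMulVec (Pi.single p 1 - Pi.single q 1) (Pi.single p 1 - Pi.single q 1)).det =
      M.det + (fiberMatrix (mergeInto p q h) * M * (fiberMatrix (mergeInto p q h))ᵀ).det := by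
  set w : C → ℝ := Pi.single p 1 - Pi.single q 1 with hw
  set P : Matrix C C ℝ := 1 + single q p 1 with hP
  have hPdet : P.det = 1 := det_transvection_of_ne q p h 1
  have hPw : P *ᵥ w = Pi.single p 1 := by
    ext x
    have := h.symm
    simp only [hP, hw, mulVec_sub, mulVec_single_one, Pi.sub_apply, col_apply, Matrix.add_apply,
      one_apply, Pi.single_apply, single_apply]
    grind
  have hconj (N : Matrix C C ℝ) : (P * N * Pᵀ).det = N.det := by simp [hPdet]
  have hrank : P * vecMulVec w w * Pᵀ = vecMulVec (Pi.single p 1) (Pi.single p 1) := by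
    rw [mul_vecMulVec, vecMulVec_mul, vecMul_transpose, hPw]
  rw [← hconj (M + _), ← hconj M, Matrix.mul_add, Matrix.add_mul, hrank]
  set N := P * M * Pᵀ with hN
  have hupd : N + vecMulVec (Pi.single p 1) (Pi.single p 1) =
      N.updateRow p (N p + Pi.single p 1) := by
    ext x y
    by_cases hx : x = p
    · subst hx
      simp [vecMulVec_apply]
    · simp [vecMulVec_apply, hx]
  rw [hupd, det_updateRow_add, updateRow_eq_self, det_updateRow_single_self]
  have hfib : fiberMatrix (mergeInto p q h) = P.submatrix Subtype.val id := by
    ext x y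
    have := x.2
    simp only [fiberMatrix, of_apply, mergeInto, hP, submatrix_apply, id, Matrix.add_apply, one_apply,
      single_apply]
    split_ifs <;> grind
  congr 2
  rw [hfib]
  rfl

end Contraction

section Trees

open SimpleGraph

variable {V : Type*}

/-- The spanning trees of `G` containing all edges of `F`. -/
def treesBetween (F G : SimpleGraph V) : Set (SimpleGraph V) := {T | F ≤ T ∧ T ≤ G ∧ T.IsTree}

open Classical in
/-- The Laplacian of the multigraph obtained from `G` by identifying vertices along `f`. -/
noncomputable def mergedLaplacian [Fintype V] {C : Type*} [Fintype C] [DecidableEq C]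
    (G : SimpleGraph V) (f : V → C) : Matrix C C ℝ :=
  weightLaplacian (fiberMatrix f * G.adjMatrix ℝ * (fiberMatrix f)ᵀ)

lemma mergedLaplacian_eq [Fintype V] {C : Type*} [Fintype C] [DecidableEq C] (G : SimpleGraph V)
    [DecidableRel G.Adj] (f : V → C) : mergedLaplacian G f =
      weightLaplacian (fiberMatrix f * G.adjMatrix ℝ * (fiberMatrix f)ᵀ) := by
  unfold mergedLaplacian
  congr!

lemma mergedLaplacian_comp [Fintype V] {C C' : Type*} [Fintype C] [DecidableEq C] [Fintype C']
    [DecidableEq C'] (G : SimpleGraph V) (f : V → C) (g : C → C') :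
    mergedLaplacian G (g ∘ f) = fiberMatrix g * mergedLaplacian G f * (fiberMatrix g)ᵀ := by
  rw [mergedLaplacian, mergedLaplacian, ← weightLaplacian_fiberMatrix, fiberMatrix_comp,
    transpose_mul]
  simp only [Matrix.mul_assoc]

lemma mergedLaplacian_sup_edge [Fintype V] {C : Type*} [Fintype C] [DecidableEq C]
    (G : SimpleGraph V) (f : V → C) {a b : V} (hab : a ≠ b) (hG : ¬ G.Adj a b) :
    mergedLaplacian (G ⊔ edge a b) f = mergedLaplacian G f +
      vecMulVec (Pi.single (f a) 1 - Pi.single (f b) 1)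
        (Pi.single (f a) 1 - Pi.single (f b) 1) := by
  classical
  have hA : (G ⊔ edge a b).adjMatrix ℝ = G.adjMatrix ℝ + (single a b 1 + single b a 1) := by
    ext x y
    have hG' : ¬ G.Adj b a := fun h => hG h.symm
    simp only [adjMatrix_apply, sup_adj, edge_adj, Matrix.add_apply, single_apply]
    by_cases h1 : a = x ∧ b = y
    · obtain ⟨rfl, rfl⟩ := h1
      simp [hG, hab, hab.symm]
    · by_cases h2 : b = x ∧ a = y
      · obtain ⟨rfl, rfl⟩ := h2
        simp [hG', hab, hab.symm]
      · have : ¬ ((x = a ∧ y = b ∨ x = b ∧ y = a) ∧ x ≠ y) := by grind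
        simp [h1, h2, this]
  rw [mergedLaplacian_eq, mergedLaplacian_eq, weightLaplacian_fiberMatrix,
    weightLaplacian_fiberMatrix, hA, weightLaplacian_add, weightLaplacian_single_add_single,
    Matrix.mul_add, Matrix.add_mul]
  congr 1
  rw [mul_vecMulVec, vecMulVec_mul, vecMul_transpose, mulVec_sub, fiberMatrix_mulVec_single,
    fiberMatrix_mulVec_single]

lemma mergedLaplacian_eq_zero [Fintype V] {C : Type*} [Fintype C] [DecidableEq C]
    (G : SimpleGraph V) (f : V → C) (hf : ∀ u v, G.Adj u v → f u = f v) : mergedLaplacian G f = 0 := by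
  refine weightLaplacian_eq_zero _ fun x y hxy => ?_
  rw [fiberMatrix_mul_mul_transpose_apply]
  refine sum_eq_zero fun v _ => sum_eq_zero fun w _ => ?_
  split_ifs with h
  · rw [adjMatrix_apply, if_neg]
    exact fun hvw => hxy (by rw [← h.1, ← h.2, hf v w hvw])
  · rfl

lemma treesBetween_sup_edge [Finite V] {F G : SimpleGraph V} {a b : V} (hG : ¬ G.Adj a b)
    (hab : a ≠ b) : (treesBetween F (G ⊔ edge a b)).ncard =
      (treesBetween F G).ncard + (treesBetween (F ⊔ edge a b) (G ⊔ edge a b)).ncard := by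
  rw [← Set.ncard_union_eq]
  · congr 1
    ext T
    have hle : edge a b ≤ T ↔ T.Adj a b := by simp [hab]
    simp only [treesBetween, Set.mem_union, Set.mem_ofPred_eq, sup_le_iff, hle]
    constructor
    · rintro ⟨h1, h2, h3⟩
      by_cases hT : T.Adj a b
      · exact Or.inr ⟨⟨h1, hT⟩, h2, h3⟩
      · refine Or.inl ⟨h1, fun x y hxy => ?_, h3⟩
        rcases h2 hxy with h | h
        · exact h
        · rw [edge_adj] at h
          rcases h.1 with ⟨rfl, rfl⟩ | ⟨rfl, rfl⟩
          · exact (hT hxy).elim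
          · exact (hT hxy.symm).elim
    · rintro (⟨h1, h2, h3⟩ | ⟨⟨h1, -⟩, h2, h3⟩)
      · exact ⟨h1, h2.trans le_sup_left, h3⟩
      · exact ⟨h1, h2, h3⟩
  · rw [Set.disjoint_left]
    rintro T ⟨-, h, -⟩ ⟨h', -, -⟩
    exact hG (h (h' (Or.inr (by simp [edge_adj, hab]))))

lemma SimpleGraph.Reachable.apply_eq_of_adj {C : Type*} {G : SimpleGraph V} {f : V → C}
    (hf : ∀ u v, G.Adj u v → f u = f v) {u v : V} (h : G.Reachable u v) : f u = f v := by
  obtain ⟨p⟩ := h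
  induction p with
  | nil => rfl
  | cons h _ ih => exact (hf _ _ h).trans ih

lemma mergeInto_comp_eq_iff_reachable {C : Type*} [DecidableEq C] {F : SimpleGraph V}
    {f : V → C} (hf : ∀ u v, f u = f v ↔ F.Reachable u v) {a b : V} (h : f b ≠ f a) (u v : V) :
    (mergeInto (f a) (f b) h ∘ f) u = (mergeInto (f a) (f b) h ∘ f) v ↔
      (F ⊔ edge a b).Reachable u v := by
  have hab : a ≠ b := fun e => h (by rw [e])
  have hadj : (F ⊔ edge a b).Reachable a b :=
    Adj.reachable (Or.inr (by simp [edge_adj, hab]))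
  have hmono {x y : V} (hxy : f x = f y) : (F ⊔ edge a b).Reachable x y :=
    ((hf x y).1 hxy).mono le_sup_left
  constructor
  · intro huv
    rcases (mergeInto_eq_mergeInto_iff h _ _).1 huv with huv | ⟨hu, hv⟩ | ⟨hu, hv⟩
    · exact hmono huv
    · exact ((hmono hu).trans hadj).trans (hmono hv.symm)
    · exact ((hmono hu).trans hadj.symm).trans (hmono hv.symm)
  · refine SimpleGraph.Reachable.apply_eq_of_adj fun x y hxy => ?_
    refine (mergeInto_eq_mergeInto_iff h _ _).2 ?_
    rcases hxy with hxy | hxy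
    · exact Or.inl ((hf x y).2 hxy.reachable)
    · rw [edge_adj] at hxy
      rcases hxy.1 with ⟨rfl, rfl⟩ | ⟨rfl, rfl⟩ <;> simp

/-- The matrix-tree theorem for spanning trees of `G` containing a spanning forest `F`, whose
components are the fibers of `f`: a rank-one perturbation of the Laplacian of the contraction `G/F`
has determinant proportional to the number of such trees. -/
theorem det_mergedLaplacian_add_vecMulVec [Fintype V] [Nonempty V] {C : Type*} [Fintype C]
    [DecidableEq C] {F G : SimpleGraph V} (hFG : F ≤ G) (hF : F.IsAcyclic) (f : V → C)
    (hf : ∀ u v, f u = f v ↔ F.Reachable u v) (hsurj : Function.Surjective f) (u v : C → ℝ) :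
    (mergedLaplacian G f + vecMulVec u v).det =
      (treesBetween F G).ncard * ((∑ x, u x) * ∑ x, v x) := by
  induction hk : (G.edgeSet \ F.edgeSet).ncard using Nat.strong_induction_on
    generalizing C F G with
  | _ k ih =>
    by_cases hGF : G ≤ F
    · obtain rfl := le_antisymm hFG hGF
      rw [mergedLaplacian_eq_zero _ _ fun x y h => (hf x y).2 h.reachable, zero_add]
      have hset (h : F.IsTree) : treesBetween F F = {F} := by
        ext T
        refine ⟨fun hT => le_antisymm hT.2.1 hT.1, ?_⟩
        rintro rfl
        exact ⟨le_rfl, le_rfl, h⟩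
      obtain ⟨r⟩ := ‹Nonempty V›
      by_cases hC : Nontrivial C
      · have hemp : treesBetween F F = ∅ := by
          refine Set.eq_empty_of_forall_notMem fun T hT => ?_
          obtain rfl := le_antisymm hT.2.1 hT.1
          obtain ⟨x, y, hxy⟩ := hC
          obtain ⟨x, rfl⟩ := hsurj x
          obtain ⟨y, rfl⟩ := hsurj y
          exact hxy ((hf x y).2 (hT.2.2.connected.preconnected x y))
        rw [hemp, det_vecMulVec]
        simp
      · rw [not_nontrivial_iff_subsingleton] at hC
        have : Unique C := ⟨⟨f r⟩, fun x => Subsingleton.elim _ _⟩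
        have htree : F.IsTree :=
          ⟨⟨fun x y => (hf x y).1 (Subsingleton.elim _ _)⟩, hF⟩
        rw [hset htree, det_unique]
        simp [vecMulVec_apply]
    · obtain ⟨a, b, hGab, hFab⟩ : ∃ a b, G.Adj a b ∧ ¬ F.Adj a b := by
        by_contra! h
        exact hGF fun x y => h x y
      have hab := hGab.ne
      obtain ⟨G', rfl, hG', hFG'⟩ : ∃ G', G' ⊔ edge a b = G ∧ ¬ G'.Adj a b ∧ F ≤ G' := by
        refine ⟨G \ edge a b, ?_, ?_, ?_⟩
        · exact sdiff_sup_cancel (by simp [hGab])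
        · simp [edge_adj, hab]
        · intro x y hxy
          refine ⟨hFG hxy, fun h => ?_⟩
          rw [edge_adj] at h
          rcases h.1 with ⟨rfl, rfl⟩ | ⟨rfl, rfl⟩
          · exact hFab hxy
          · exact hFab hxy.symm
      have hdel : (G'.edgeSet \ F.edgeSet).ncard < k := by
        rw [← hk]
        refine Set.ncard_lt_ncard ⟨Set.sdiff_subset_sdiff_left (edgeSet_mono le_sup_left), fun h => ?_⟩
          (Set.toFinite _)
        exact hG' (h (show s(a, b) ∈ _ from ⟨hGab, hFab⟩)).1
      have hadd : ((G' ⊔ edge a b).edgeSet \ (F ⊔ edge a b).edgeSet).ncard < k := by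
        rw [← hk]
        refine Set.ncard_lt_ncard ⟨Set.sdiff_subset_sdiff_right (edgeSet_mono le_sup_left),
          fun h => ?_⟩ (Set.toFinite _)
        exact (h (show s(a, b) ∈ _ from ⟨hGab, hFab⟩)).2 (Or.inr (by simp [edge_adj, hab]))
      rw [treesBetween_sup_edge hG' hab, mergedLaplacian_sup_edge G' f hab hG']
      have hrec := ih _ hdel hFG' hF f hf hsurj u v rfl
      by_cases hfab : f b = f a
      · have hemp : treesBetween (F ⊔ edge a b) (G' ⊔ edge a b) = ∅ := by
          refine Set.eq_empty_of_forall_notMem fun T hT => ?_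
          have hcyc := hT.2.2.isAcyclic.anti hT.1
          have hbr := isAcyclic_iff_forall_adj_isBridge.1 hcyc
            (show (F ⊔ edge a b).Adj a b from Or.inr (by simp [edge_adj, hab]))
          rw [isBridge_iff] at hbr
          refine hbr (((hf a b).1 hfab.symm).mono fun x y hxy => ?_)
          rw [deleteEdges_adj]
          refine ⟨Or.inl hxy, fun h => hFab ?_⟩
          rw [Set.mem_singleton_iff] at h
          rw [← mem_edgeSet, ← h]
          exact hxy
        rw [hemp, hfab]
        simpa using hrec
      · set g := mergeInto (f a) (f b) hfab with hg
        have hnr : ¬ F.Reachable a b := fun h => hfab ((hf a b).2 h).symm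
        have hctr := ih _ hadd (sup_le_sup_right hFG' _)
          ((isAcyclic_add_edge_iff_of_not_reachable a b hnr).2 hF) (g ∘ f)
          (mergeInto_comp_eq_iff_reachable hf hfab)
          ((mergeInto_surjective hfab).comp hsurj) (fiberMatrix g *ᵥ u) (fiberMatrix g *ᵥ v) rfl
        have hgab : g (f a) = g (f b) := (mergeInto_eq_mergeInto_iff hfab _ _).2 (by simp)
        rw [sum_fiberMatrix_mulVec, sum_fiberMatrix_mulVec,
          mergedLaplacian_sup_edge G' (g ∘ f) hab hG', Function.comp_apply, Function.comp_apply,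
          hgab, sub_self, zero_vecMulVec, add_zero, mergedLaplacian_comp, ← vecMul_transpose _ v,
          ← vecMulVec_mul, ← mul_vecMulVec, ← Matrix.add_mul, ← Matrix.mul_add] at hctr
        rw [add_right_comm, det_add_vecMulVec_single_sub_single _ hfab, hrec, hctr]
        push_cast
        ring

end Trees

section Multipartite

/-- Transfer of a singular determinant between a `C × C` and an `S × S` matrix, at the level of
rank-one perturbations and adjugates. -/
lemma adjugate_one_sub_mul_prod {S C : Type*} [Fintype S] [DecidableEq S] [Fintype C]
    [DecidableEq C] (A : Matrix S C ℝ) (B : Matrix C S ℝ) (d : C → ℝ) (hd : ∀ p, d p ≠ 0)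
    (hdet : (diagonal d - B * A).det = 0) (i j : S) :
    (1 - A * (diagonal d⁻¹ * B)).adjugate i j * ∏ p, d p =
      (diagonal d - B * A + vecMulVec (fun p => B p j) (A i)).det := by
  have hfactor (A' : Matrix S C ℝ) :
      (diagonal d - B * A').det = (∏ p, d p) * (1 - A' * (diagonal d⁻¹ * B)).det := by
    rw [← det_one_sub_mul_comm, ← det_diagonal, ← det_mul, Matrix.mul_sub, Matrix.mul_one,
      ← Matrix.mul_assoc, ← Matrix.mul_assoc, diagonal_mul_diagonal]
    have : (fun p => d p * d⁻¹ p) = 1 := by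
      ext p
      simp [hd p]
    rw [this, diagonal_one', Matrix.one_mul]
  set X := 1 - A * (diagonal d⁻¹ * B) with hX
  have hXdet : X.det = 0 := by
    rw [hfactor A] at hdet
    exact (mul_eq_zero.1 hdet).resolve_left (prod_ne_zero_iff.2 fun p _ => hd p)
  have hpert : diagonal d - B * A + vecMulVec (fun p => B p j) (A i) =
      diagonal d - B * ((1 - single j i (1 : ℝ)) * A) := by
    have : B * (single j i (1 : ℝ) * A) = vecMulVec (fun p => B p j) (A i) := by
      ext p q
      rw [mul_apply, sum_eq_single j]
      · simp [vecMulVec_apply]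
      · intro k _ hk
        simp [hk]
      · simp
    rw [Matrix.sub_mul, Matrix.mul_sub, Matrix.one_mul, this]
    abel
  have hrow : 1 - (1 - single j i (1 : ℝ)) * A * (diagonal d⁻¹ * B) =
      X.updateRow j ((X j - X i) + Pi.single i 1) := by
    have : A * (diagonal d⁻¹ * B) = 1 - X := by simp [hX]
    rw [Matrix.mul_assoc, this]
    ext x y
    by_cases hx : x = j
    · subst hx
      simp [Matrix.sub_mul, Matrix.mul_sub, one_apply, Pi.single_apply, single_apply, eq_comm]
      ring
    · simp [Matrix.sub_mul, Matrix.mul_sub, hx, Ne.symm hx]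
  have hzero : (X.updateRow j (X j - X i)).det = 0 := by
    by_cases hij : j = i
    · subst hij
      exact det_eq_zero_of_row_eq_zero j (by simp)
    · have := det_updateRow_add_smul_self X hij (-1)
      rwa [hXdet, neg_one_smul, ← sub_eq_add_neg] at this
  rw [hpert, hfactor, hrow, det_updateRow_add, hzero, zero_add, adjugate_apply, mul_comm]

variable {s c : ℕ} (n : Fin s → ℕ) (comp : (Σ i, Fin (n i)) → Fin c)

lemma fiberMatrix_fst_mul_transpose_apply (i : Fin s) (p : Fin c) :
    (fiberMatrix (Sigma.fst : (Σ i, Fin (n i)) → Fin s) * (fiberMatrix comp)ᵀ) i p =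
      nIP n comp i p := by
  rw [nIP, Nat.card_eq_fintype_card, Fintype.card_subtype, mul_apply, card_filter]
  push_cast
  refine sum_congr rfl fun v _ => ?_
  by_cases h : v.1 = i <;> by_cases h' : comp v = p <;> simp [fiberMatrix, h, h']

lemma fiberMatrix_mul_one_sub_apply (p : Fin c) (i : Fin s) :
    (fiberMatrix comp * ((of (fun _ _ => 1) -
      (fiberMatrix (Sigma.fst : (Σ i, Fin (n i)) → Fin s))ᵀ :
        Matrix (Σ i, Fin (n i)) (Fin s) ℝ))) p i = mP n comp p - nIP n comp i p := by
  rw [Matrix.mul_sub, Matrix.sub_apply]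
  congr 1
  · rw [mP, Nat.card_eq_fintype_card, Fintype.card_subtype, mul_apply, card_filter]
    push_cast
    exact sum_congr rfl fun v _ => by simp [fiberMatrix]
  · rw [← fiberMatrix_fst_mul_transpose_apply, ← transpose_apply
      (fiberMatrix Sigma.fst * (fiberMatrix comp)ᵀ), transpose_mul, transpose_transpose]

lemma sum_mP : ∑ p, (mP n comp p : ℝ) = ∑ i, (n i : ℝ) := by
  have h := card_eq_sum_card_fiberwise (s := univ) (t := univ) (f := comp) (by simp)
  simp only [card_univ, Fintype.card_sigma, Fintype.card_fin] at h
  rw [← Nat.cast_sum, ← Nat.cast_sum, h]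
  simp [mP, Nat.card_eq_fintype_card, Fintype.card_subtype]

lemma sum_nIP_left (p : Fin c) : ∑ i, (nIP n comp i p : ℝ) = mP n comp p := by
  have h := card_eq_sum_card_fiberwise (s := univ.filter fun v => comp v = p) (t := univ)
    (f := Sigma.fst) (by simp)
  rw [← Nat.cast_sum, mP, Nat.card_eq_fintype_card, Fintype.card_subtype, h]
  simp [nIP, Nat.card_eq_fintype_card, Fintype.card_subtype, filter_filter, and_comm]

lemma sum_nIP_right (i : Fin s) : ∑ p, (nIP n comp i p : ℝ) = n i := by
  have h := card_eq_sum_card_fiberwise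
    (s := univ.filter fun v : (Σ i, Fin (n i)) => v.1 = i) (t := univ) (f := comp) (by simp)
  have hi : #(univ.filter fun v : (Σ i, Fin (n i)) => v.1 = i) = n i := by
    rw [← Fintype.card_subtype, Fintype.card_congr (Equiv.sigmaSubtype i), Fintype.card_fin]
  rw [← Nat.cast_sum, ← hi, h]
  simp [nIP, Nat.card_eq_fintype_card, Fintype.card_subtype, filter_filter]

lemma alphaR_eq_sum (p : Fin c) :
    alphaR n comp p = ∑ i, ((mP n comp p : ℝ) - nIP n comp i p) * n i := by
  simp only [alphaR, sub_mul, sum_sub_distrib, ← mul_sum]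
  simp only [mul_comm]

lemma lt_sum_of_two_le (hs : 2 ≤ s) (hn : ∀ i, 1 ≤ n i) (i : Fin s) :
    (n i : ℝ) < ∑ k, (n k : ℝ) := by
  have : Nontrivial (Fin s) := Fin.nontrivial_iff_two_le.2 hs
  obtain ⟨k, hk⟩ := exists_ne i
  exact single_lt_sum hk (mem_univ i) (mem_univ k) (by exact_mod_cast hn k)
    fun _ _ _ => Nat.cast_nonneg _

lemma alphaR_pos (hs : 2 ≤ s) (hn : ∀ i, 1 ≤ n i) (hsurj : Function.Surjective comp)
    (p : Fin c) : 0 < alphaR n comp p := by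
  have heq : alphaR n comp p = ∑ i, ((∑ k, (n k : ℝ)) - n i) * nIP n comp i p := by
    simp only [alphaR, sub_mul, sum_sub_distrib, ← mul_sum, sum_nIP_left]
  rw [heq]
  have hlt (i : Fin s) := sub_pos.2 (lt_sum_of_two_le n hs hn i)
  obtain ⟨v, hv⟩ := hsurj p
  refine sum_pos' (fun i _ => mul_nonneg (hlt i).le (Nat.cast_nonneg _))
    ⟨v.1, mem_univ _, mul_pos (hlt _) (Nat.cast_pos.2 ?_)⟩
  have : Nonempty {w : Σ i, Fin (n i) // w.1 = v.1 ∧ comp w = p} := ⟨⟨v, rfl, hv⟩⟩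
  exact Nat.card_pos

lemma mergedLaplacian_completeMultipartiteGraph :
    mergedLaplacian (SimpleGraph.completeMultipartiteGraph fun i => Fin (n i)) comp =
      diagonal (alphaR n comp) -
        of (fun p i => (mP n comp p : ℝ) - nIP n comp i p) * of fun i p => (nIP n comp i p : ℝ) := by
  classical
  set φ := fiberMatrix (Sigma.fst : (Σ i, Fin (n i)) → Fin s)
  have hadj : (SimpleGraph.completeMultipartiteGraph fun i => Fin (n i)).adjMatrix ℝ =
      (of (fun _ _ => 1) - φᵀ) * φ := by
    ext v w
    rw [SimpleGraph.adjMatrix_apply, mul_apply, sum_eq_single w.1]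
    · by_cases h : v.1 = w.1 <;> simp [φ, fiberMatrix, h]
    · intro i _ hi
      simp [φ, fiberMatrix, hi.symm]
    · simp
  have hB : (of fun p i => (mP n comp p : ℝ) - nIP n comp i p) =
      fiberMatrix comp * (of (fun _ _ => 1) - φᵀ) := by
    ext p i
    exact (fiberMatrix_mul_one_sub_apply n comp p i).symm
  have hA : (of fun i p => (nIP n comp i p : ℝ)) = φ * (fiberMatrix comp)ᵀ := by
    ext i p
    exact (fiberMatrix_fst_mul_transpose_apply n comp i p).symm
  have hW : fiberMatrix comp *
      (SimpleGraph.completeMultipartiteGraph fun i => Fin (n i)).adjMatrix ℝ *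
        (fiberMatrix comp)ᵀ = of (fun p i => (mP n comp p : ℝ) - nIP n comp i p) *
          of fun i p => (nIP n comp i p : ℝ) := by
    rw [hadj, hA, hB]
    simp only [Matrix.mul_assoc]
  have hsum : (of (fun p i => (mP n comp p : ℝ) - nIP n comp i p) *
      of fun i p => (nIP n comp i p : ℝ)) *ᵥ 1 = alphaR n comp := by
    ext p
    rw [← mulVec_mulVec, alphaR_eq_sum]
    simp only [mulVec, dotProduct, of_apply, Pi.one_apply, mul_one, sum_nIP_right]
  rw [mergedLaplacian_eq, hW, weightLaplacian, hsum]

lemma Zzero_eq_transpose : Zzero n comp = (1 - of (fun i p => (nIP n comp i p : ℝ)) *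
    (diagonal (alphaR n comp)⁻¹ * of fun p i => (mP n comp p : ℝ) - nIP n comp i p))ᵀ := by
  rw [Zzero, transpose_sub, transpose_one]
  congr 1
  ext i j
  rw [transpose_apply, mul_apply]
  simp only [of_apply, diagonal_mul, Pi.inv_apply]
  exact sum_congr rfl fun p _ => by ring

end Multipartite

/-- Main theorem: the number of spanning trees of `K_{n_1,…,n_s}` containing a spanning forest
`F` with `c` components is `τ_F = (C_{ij}/(n_i(n − n_j))) · ∏_p α_p` for any `i, j`, where
the `(i,j)` cofactor `C_{ij}` of `Z(0)` is the `(j,i)` entry of its adjugate. -/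
theorem stmt_16 (s : ℕ) (hs : 2 ≤ s) (n : Fin s → ℕ) (hn : ∀ i, 1 ≤ n i)
    (F : SimpleGraph (Σ i, Fin (n i)))
    (hFG : F ≤ SimpleGraph.completeMultipartiteGraph (fun i => Fin (n i)))
    (hF : F.IsAcyclic)
    (c : ℕ) (comp : (Σ i, Fin (n i)) → Fin c)
    (hcomp : ∀ u v, comp u = comp v ↔ F.Reachable u v)
    (hsurj : Function.Surjective comp) :
    ∀ i j : Fin s,
      ((Nat.card {T : SimpleGraph (Σ i, Fin (n i)) //
      F ≤ T ∧ T ≤ SimpleGraph.completeMultipartiteGraph (fun i => Fin (n i)) ∧ T.IsTree} : ℕ) : ℝ)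
        = (Zzero n comp).adjugate j i / ((n i : ℝ) * ((∑ k, (n k : ℝ)) - (n j : ℝ))) *
            ∏ p, alphaR n comp p := by
  intro i j
  have : Nonempty (Σ i, Fin (n i)) := ⟨⟨i, ⟨0, hn i⟩⟩⟩
  have hdet := det_mergedLaplacian_add_vecMulVec hFG hF comp hcomp hsurj
  rw [mergedLaplacian_completeMultipartiteGraph] at hdet
  have hα (p : Fin c) := (alphaR_pos n comp hs hn hsurj p).ne'
  have hadj := adjugate_one_sub_mul_prod _ _ (alphaR n comp) hα
    (by simpa using hdet 0 0) i j
  have hcol : ∑ p, ((mP n comp p : ℝ) - nIP n comp j p) = (∑ k, (n k : ℝ)) - n j := by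
    rw [sum_sub_distrib, sum_mP, sum_nIP_right]
  rw [hdet] at hadj
  simp only [of_apply, sum_nIP_right, hcol] at hadj
  have hi : (n i : ℝ) ≠ 0 := Nat.cast_ne_zero.2 (Nat.one_le_iff_ne_zero.1 (hn i))
  have hj : (∑ k, (n k : ℝ)) - n j ≠ 0 := (sub_pos.2 (lt_sum_of_two_le n hs hn j)).ne'
  rw [Zzero_eq_transpose, ← adjugate_transpose, transpose_apply, div_mul_eq_mul_div, hadj,
    eq_div_iff (mul_ne_zero hi hj), mul_comm (n i : ℝ)]
  rfl
end

section
/- For a spanning forest F of the complete bipartite graph K_{n_1,n_2} with components T_1,...,T_c, the number of spanning trees containing F equals (1/(n_1 n_2)) · (Π_{p=1}^c (n_{1p}n_2 + n_{2p}n_1)) · (1 − Σ_{p=1}^c n_{1p}n_{2p}/(n_{1p}n_2 + n_{2p}n_1)). -/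
open Finset

/-- `n_{1p} = |X_1 ∩ V(T_p)|` in the complete bipartite graph `K_{n_1,n_2}`. -/
noncomputable def n1P {n1 n2 c : ℕ} (comp : Fin n1 ⊕ Fin n2 → Fin c) (p : Fin c) : ℕ :=
  Nat.card {a : Fin n1 // comp (Sum.inl a) = p}

/-- `n_{2p} = |X_2 ∩ V(T_p)|` in the complete bipartite graph `K_{n_1,n_2}`. -/
noncomputable def n2P {n1 n2 c : ℕ} (comp : Fin n1 ⊕ Fin n2 → Fin c) (p : Fin c) : ℕ :=
  Nat.card {b : Fin n2 // comp (Sum.inr b) = p}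

/-- The Dong–Ge product, for parts indexed by `P` with sizes `A p` and `B p`. -/
noncomputable def dongGe {ι : Type*} (P : Finset ι) (A B : ι → ℝ) (x y : ℝ) : ℝ :=
  1 / (x * y) * (∏ p ∈ P, (A p * y + B p * x)) *
    (1 - ∑ p ∈ P, A p * B p / (A p * y + B p * x))

theorem dongGe_merge {ι : Type*} [DecidableEq ι] {P : Finset ι} {A B A' B' : ι → ℝ} {x y : ℝ}
    (hw : ∀ p ∈ P, 0 < A p * y + B p * x) {p q : ι} (hp : p ∈ P) (hq : q ∈ P) (hpq : p ≠ q)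
    (hAp : A' p = A p + A q) (hBp : B' p = B p + B q)
    (hA : ∀ r, r ≠ p → r ≠ q → A' r = A r) (hB : ∀ r, r ≠ p → r ≠ q → B' r = B r) :
    dongGe (P.erase q) A' B' x y =
      1 / (x * y) * (∏ r ∈ P, (A r * y + B r * x)) *
        (((A p * y + B p * x) + (A q * y + B q * x)) / ((A p * y + B p * x) * (A q * y + B q * x)) *
          (1 - (∑ r ∈ P, A r * B r / (A r * y + B r * x)) + A p * B p / (A p * y + B p * x)
            + A q * B q / (A q * y + B q * x)
            - (A p + A q) * (B p + B q) / ((A p * y + B p * x) + (A q * y + B q * x)))) := by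
  have hp' : p ∈ P.erase q := mem_erase.2 ⟨hpq, hp⟩
  have hwp := hw p hp
  have hwq := hw q hq
  have e1 : ∏ r ∈ (P.erase q).erase p, (A' r * y + B' r * x) =
      ∏ r ∈ (P.erase q).erase p, (A r * y + B r * x) :=
    prod_congr rfl fun r hr ↦ by
      simp only [mem_erase] at hr
      rw [hA r hr.1 hr.2.1, hB r hr.1 hr.2.1]
  have e2 : ∑ r ∈ (P.erase q).erase p, A' r * B' r / (A' r * y + B' r * x) =
      ∑ r ∈ (P.erase q).erase p, A r * B r / (A r * y + B r * x) :=
    sum_congr rfl fun r hr ↦ by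
      simp only [mem_erase] at hr
      rw [hA r hr.1 hr.2.1, hB r hr.1 hr.2.1]
  rw [dongGe, ← mul_prod_erase _ _ hp', ← add_sum_erase _ _ hp', e1, e2, ← mul_prod_erase P _ hq,
    ← mul_prod_erase _ _ hp', ← add_sum_erase P _ hq, ← add_sum_erase _ _ hp', hAp, hBp]
  have hs : (A p + A q) * y + (B p + B q) * x =
    (A p * y + B p * x) + (A q * y + B q * x) := by ring
  rw [hs]
  generalize A p * y + B p * x = u at *
  generalize A q * y + B q * x = v at *
  field_simp
  ring

theorem sum_sum_dongGe_merge {ι : Type*} [DecidableEq ι] {P : Finset ι} {A B : ι → ℝ} {x y : ℝ}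
    (hx : 0 < x) (hy : 0 < y) (hw : ∀ p ∈ P, 0 < A p * y + B p * x)
    (hsA : ∑ p ∈ P, A p = x) (hsB : ∑ p ∈ P, B p = y) (g : ι → ι → ℝ)
    (hg : ∀ p ∈ P, ∀ q ∈ P, p ≠ q → ∃ A' B' : ι → ℝ, A' p = A p + A q ∧ B' p = B p + B q ∧
      (∀ r, r ≠ p → r ≠ q → A' r = A r) ∧ (∀ r, r ≠ p → r ≠ q → B' r = B r) ∧
      g p q = dongGe (P.erase q) A' B' x y) :
    ∑ p ∈ P, ∑ q ∈ P, A p * (B q * if p = q then 0 else g p q) =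
      ((#P : ℝ) - 1) * dongGe P A B x y := by
  set w : ι → ℝ := fun p ↦ A p * y + B p * x with hw_def
  set a : ι → ℝ := fun p ↦ A p / w p with ha_def
  set b : ι → ℝ := fun p ↦ B p / w p with hb_def
  set S : ℝ := ∑ p ∈ P, A p * B p / w p with hS
  set K : ℝ := 1 / (x * y) * ∏ p ∈ P, w p with hK
  have haw : ∀ p ∈ P, A p = a p * w p := fun p hp ↦ (div_mul_cancel₀ _ (hw p hp).ne').symm
  have hbw : ∀ p ∈ P, B p = b p * w p := fun p hp ↦ (div_mul_cancel₀ _ (hw p hp).ne').symm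
  have hone : ∀ p ∈ P, a p * y + b p * x = 1 := fun p hp ↦ by
    have := (hw p hp).ne'
    simp only [ha_def, hb_def]
    rw [div_mul_eq_mul_div, div_mul_eq_mul_div, ← add_div]
    exact div_self this
  have hterm : ∀ p ∈ P, ∀ q ∈ P, A p * (B q * if p = q then 0 else g p q) =
      K * (A p * b q * (1 - S) + a p * B q * (1 - S) + A p * (b q * (a q * B q))
        + (a p * (a p * B p)) * B q - (a p * A p) * (b q * B q) - (a p * B p) * (b q * A q)
        - if p = q then 2 * (a p * B p) * (1 - S) else 0) := by
    intro p hp q hq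
    by_cases hpq : p = q
    · subst hpq
      rw [if_pos rfl, if_pos rfl, haw p hp, hbw p hp]
      ring
    · rw [if_neg hpq, if_neg hpq]
      obtain ⟨A', B', h1, h2, h3, h4, h5⟩ := hg p hp q hq hpq
      rw [h5, dongGe_merge hw hp hq hpq h1 h2 h3 h4]
      change A p * (B q * (K * ((w p + w q) / (w p * w q) * (1 - S + A p * B p / w p
        + A q * B q / w q - (A p + A q) * (B p + B q) / (w p + w q))))) = _
      have hwp : 0 < w p := hw p hp
      have hwq : 0 < w q := hw q hq
      have hwpq : w p + w q ≠ 0 := by positivity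
      simp only [ha_def, hb_def]
      field_simp
      ring
  have hSa : ∑ p ∈ P, a p * B p = S := sum_congr rfl fun p _ ↦ by simp only [ha_def]; ring
  have hSb : ∑ p ∈ P, b p * A p = S := sum_congr rfl fun p _ ↦ by simp only [hb_def]; ring
  have hA2 : y * ∑ p ∈ P, a p * A p = x * (1 - S) := by
    rw [mul_sub, mul_one, ← hSb, eq_sub_iff_add_eq, mul_sum, mul_sum, ← sum_add_distrib]
    conv_rhs => rw [← hsA]
    exact sum_congr rfl fun p hp ↦ by linear_combination A p * hone p hp
  have hB2 : x * ∑ p ∈ P, b p * B p = y * (1 - S) := by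
    rw [mul_sub, mul_one, ← hSa, eq_sub_iff_add_eq, mul_sum, mul_sum, ← sum_add_distrib]
    conv_rhs => rw [← hsB]
    exact sum_congr rfl fun p hp ↦ by linear_combination B p * hone p hp
  have hcard : y * ∑ p ∈ P, a p + x * ∑ p ∈ P, b p = #P := by
    rw [mul_sum, mul_sum, ← sum_add_distrib, sum_congr rfl fun p hp ↦ ?_, sum_const,
      nsmul_eq_mul, mul_one]
    linear_combination hone p hp
  have hS2 : y * ∑ p ∈ P, a p * (a p * B p) + x * ∑ p ∈ P, b p * (a p * B p) = S := by
    rw [mul_sum, mul_sum, ← sum_add_distrib, ← hSa]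
    exact sum_congr rfl fun p hp ↦ by linear_combination (a p * B p) * hone p hp
  have hAB : (∑ p ∈ P, a p * A p) * ∑ p ∈ P, b p * B p = (1 - S) ^ 2 := by
    have : (x * y) * ((∑ p ∈ P, a p * A p) * ∑ p ∈ P, b p * B p) = (x * y) * (1 - S) ^ 2 := by
      linear_combination (x * ∑ p ∈ P, b p * B p) * hA2 + x * (1 - S) * hB2
    exact mul_left_cancel₀ (by positivity) this
  have hD : dongGe P A B x y = K * (1 - S) := rfl
  rw [hD, sum_congr rfl fun p hp ↦ sum_congr rfl (hterm p hp)]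
  simp only [← mul_sum, sum_add_distrib, sum_sub_distrib, ← sum_mul, sum_ite_eq, sum_ite_mem,
    inter_self, hSa, hSb, hsA, hsB]
  linear_combination K * (1 - S) * hcard + K * hS2 - K * hAB

theorem reachable_sup_edge_iff {V ι : Type*} [DecidableEq ι] {F : SimpleGraph V} {f : V → ι}
    (hf : ∀ a b, f a = f b ↔ F.Reachable a b) {u v : V} (huv : u ≠ v) (a b : V) :
    ((if f a = f v then f u else f a) = if f b = f v then f u else f b) ↔
      (F ⊔ SimpleGraph.edge u v).Reachable a b := by
  have hle : F ≤ F ⊔ SimpleGraph.edge u v := le_sup_left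
  have hadj : (F ⊔ SimpleGraph.edge u v).Adj u v := by
    simp [SimpleGraph.edge_adj, huv]
  constructor
  · intro h
    have key : ∀ c, ∃ d, f d = (if f c = f v then f u else f c) ∧
        (F ⊔ SimpleGraph.edge u v).Reachable c d := by
      intro c
      split_ifs with hc
      · exact ⟨u, rfl, (((hf c v).1 hc).mono hle).trans hadj.symm.reachable⟩
      · exact ⟨c, rfl, .rfl⟩
    obtain ⟨d, hd, had⟩ := key a
    obtain ⟨e, he, hbe⟩ := key b
    exact had.trans ((((hf d e).1 (by rw [hd, he, h])).mono hle).trans hbe.symm)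
  · rintro ⟨w⟩
    induction w with
    | nil => rfl
    | @cons a c b hac _ ih =>
      refine Eq.trans ?_ ih
      rcases hac with hac | hac
      · rw [(hf a c).2 hac.reachable]
      · rw [SimpleGraph.edge_adj] at hac
        rcases hac with ⟨⟨rfl, rfl⟩ | ⟨rfl, rfl⟩, -⟩ <;> simp

theorem image_merge {V ι : Type*} [Fintype V] [DecidableEq ι] {f : V → ι} {u v : V}
    (huv : f u ≠ f v) :
    univ.image (fun a ↦ if f a = f v then f u else f a) = (univ.image f).erase (f v) := by
  ext i
  simp only [mem_image, mem_univ, true_and, mem_erase]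
  constructor
  · rintro ⟨a, rfl⟩
    split_ifs with h
    · exact ⟨huv, u, rfl⟩
    · exact ⟨h, a, rfl⟩
  · rintro ⟨hi, a, rfl⟩
    exact ⟨a, if_neg hi⟩

theorem isTree_of_card_image_eq_one {V ι : Type*} [Fintype V] [Nonempty V] [DecidableEq ι]
    {F : SimpleGraph V} (hF : F.IsAcyclic) {f : V → ι} (hf : ∀ a b, f a = f b ↔ F.Reachable a b)
    (h : #(univ.image f) = 1) : F.IsTree := by
  have hconn : F.Preconnected := fun a b ↦ (hf a b).1 <|
    card_le_one.1 h.le _ (mem_image_of_mem f (mem_univ a)) _ (mem_image_of_mem f (mem_univ b))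
  exact ⟨⟨hconn⟩, hF⟩

/-- In a forest, the number of edges plus the number of components is the number of vertices. -/
theorem card_edgeFinset_add_card_image {V ι : Type*} [Fintype V] [Nonempty V] [DecidableEq ι]
    (F : SimpleGraph V) [Fintype F.edgeSet] (hF : F.IsAcyclic) (f : V → ι)
    (hf : ∀ a b, f a = f b ↔ F.Reachable a b) :
    #F.edgeFinset + #(univ.image f) = Fintype.card V := by
  classical
  induction hc : #(univ.image f) generalizing F f with
  | zero =>
    rw [card_eq_zero, image_eq_empty] at hc
    exact absurd hc univ_nonempty.ne_empty
  | succ c ih =>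
    rcases Nat.eq_zero_or_pos c with rfl | hpos
    · exact (isTree_of_card_image_eq_one hF hf hc).card_edgeFinset
    · obtain ⟨i, hi, j, hj, hij⟩ := one_lt_card.1 (show 1 < #(univ.image f) by omega)
      obtain ⟨u, -, rfl⟩ := mem_image.1 hi
      obtain ⟨v, -, rfl⟩ := mem_image.1 hj
      have hr : ¬ F.Reachable u v := fun h ↦ hij ((hf u v).2 h)
      have huv : u ≠ v := fun h ↦ hij (congrArg f h)
      have := ih (F ⊔ SimpleGraph.edge u v) (hF.sup_edge_of_not_reachable hr) _
        (reachable_sup_edge_iff hf huv) (by rw [image_merge hij, card_erase_of_mem hj, hc]; rfl)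
      rw [F.card_edgeFinset_sup_edge (fun h ↦ hr h.reachable) huv] at this
      rw [← add_assoc, add_right_comm]
      convert this

/-- A tree containing a forest has exactly the edges between distinct components to add. -/
theorem SimpleGraph.IsTree.adj_and_ne_iff {V ι : Type*} {F T : SimpleGraph V} {f : V → ι}
    (hf : ∀ a b, f a = f b ↔ F.Reachable a b) (hT : T.IsTree) (hFT : F ≤ T) (u v : V) :
    T.Adj u v ∧ f u ≠ f v ↔ T.Adj u v ∧ ¬ F.Adj u v := by
  refine and_congr_right fun hadj ↦ ?_
  rw [Ne, hf, not_iff_not]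
  refine ⟨fun hr ↦ by_contra fun hn ↦ ?_, SimpleGraph.Adj.reachable⟩
  have hb := SimpleGraph.isAcyclic_iff_forall_adj_isBridge.1 hT.isAcyclic hadj
  rw [SimpleGraph.isBridge_iff] at hb
  refine hb (hr.mono fun a b hab ↦ ?_)
  rw [SimpleGraph.deleteEdges_adj]
  refine ⟨hFT hab, fun h ↦ hn ?_⟩
  rw [Set.mem_singleton_iff] at h
  rwa [← SimpleGraph.mem_edgeSet, ← h]

/-- A spanning tree of a complete bipartite graph containing a forest with `c` components joins
exactly `c - 1` pairs of vertices from distinct components. -/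
theorem card_filter_adj_ne_add_one {α β ι : Type*} [Fintype α] [Fintype β] [Nonempty (α ⊕ β)]
    [DecidableEq ι] {F T : SimpleGraph (α ⊕ β)} (hF : F.IsAcyclic) {f : α ⊕ β → ι}
    (hf : ∀ a b, f a = f b ↔ F.Reachable a b) (hFT : F ≤ T)
    (hTG : T ≤ completeBipartiteGraph α β) (hT : T.IsTree)
    [DecidablePred fun e : α × β ↦ T.Adj (.inl e.1) (.inr e.2) ∧ f (.inl e.1) ≠ f (.inr e.2)] :
    #{e : α × β | T.Adj (.inl e.1) (.inr e.2) ∧ f (.inl e.1) ≠ f (.inr e.2)} + 1 =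
      #(univ.image f) := by
  classical
  have hcard : #{e : α × β | T.Adj (.inl e.1) (.inr e.2) ∧ f (.inl e.1) ≠ f (.inr e.2)} =
      #(T.edgeFinset \ F.edgeFinset) := by
    refine card_bij (fun e _ ↦ s(.inl e.1, .inr e.2)) ?_ ?_ ?_
    · intro e he
      simpa [hT.adj_and_ne_iff hf hFT] using he
    · rintro ⟨a, b⟩ - ⟨a', b'⟩ - h
      simpa using h
    · intro e he
      induction e with | _ x y
      simp only [mem_sdiff, SimpleGraph.mem_edgeFinset, SimpleGraph.mem_edgeSet] at he
      have hG := hTG he.1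
      rcases x with a | b <;> rcases y with a' | b' <;> simp at hG
      · exact ⟨(a, b'), by simpa [hT.adj_and_ne_iff hf hFT] using he, rfl⟩
      · refine ⟨(a', b), ?_, Sym2.eq_swap⟩
        simpa [hT.adj_and_ne_iff hf hFT, SimpleGraph.adj_comm] using he
  have h1 := card_edgeFinset_add_card_image F hF f hf
  have h2 := hT.card_edgeFinset
  have h3 := card_sdiff_add_card_eq_card (SimpleGraph.edgeFinset_mono hFT)
  omega

/-- The number of spanning trees of `G` containing `F`. -/
noncomputable def treesContaining {V : Type*} (G F : SimpleGraph V) : ℕ :=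
  Nat.card {T : SimpleGraph V // F ≤ T ∧ T ≤ G ∧ T.IsTree}

theorem treesContaining_eq_one {V : Type*} {G F : SimpleGraph V} (hFG : F ≤ G) (hF : F.IsTree) :
    treesContaining G F = 1 := by
  rw [treesContaining, Nat.card_eq_one_iff_unique]
  refine ⟨⟨fun S T ↦ Subtype.ext ?_⟩, ⟨⟨F, le_rfl, hFG, hF⟩⟩⟩
  have key : ∀ T : SimpleGraph V, F ≤ T → T.IsTree → T = F := fun T hT hTt ↦
    le_antisymm ((SimpleGraph.isTree_iff_minimal_connected.1 hTt).2 hF.connected hT) hT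
  rw [key S S.2.1 S.2.2.2, key T T.2.1 T.2.2.2]

theorem sum_treesContaining_sup_edge {α β ι : Type*} [Fintype α] [Fintype β] [Nonempty (α ⊕ β)]
    [DecidableEq ι] {F : SimpleGraph (α ⊕ β)} (hF : F.IsAcyclic) {f : α ⊕ β → ι}
    (hf : ∀ a b, f a = f b ↔ F.Reachable a b) :
    ∑ a : α, ∑ b : β, (if f (.inl a) = f (.inr b) then 0 else
        treesContaining (completeBipartiteGraph α β)
          (F ⊔ SimpleGraph.edge (.inl a) (.inr b))) =
      (#(univ.image f) - 1) * treesContaining (completeBipartiteGraph α β) F := by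
  classical
  have hN : ∀ F : SimpleGraph (α ⊕ β), treesContaining (completeBipartiteGraph α β) F =
      #{T : SimpleGraph (α ⊕ β) | F ≤ T ∧ T ≤ completeBipartiteGraph α β ∧ T.IsTree} := by
    intro F
    rw [treesContaining, Nat.card_eq_fintype_card, Fintype.card_subtype]
  have hterm : ∀ a : α, ∀ b : β, (if f (.inl a) = f (.inr b) then 0 else
        treesContaining (completeBipartiteGraph α β)
          (F ⊔ SimpleGraph.edge (.inl a) (.inr b))) =
      ∑ T : SimpleGraph (α ⊕ β) with F ≤ T ∧ T ≤ completeBipartiteGraph α β ∧ T.IsTree,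
        if T.Adj (.inl a) (.inr b) ∧ f (.inl a) ≠ f (.inr b) then 1 else 0 := by
    intro a b
    split_ifs with h
    · simp [h]
    · rw [hN, ← card_filter, filter_filter]
      congr 1
      ext T
      simp only [mem_filter, mem_univ, true_and, sup_le_iff, SimpleGraph.edge_le_iff]
      simp [h]
      tauto
  simp_rw [hterm]
  rw [← Fintype.sum_prod_type', sum_comm, hN, mul_comm, ← smul_eq_mul, ← sum_const]
  refine sum_congr rfl fun T hT ↦ ?_
  simp only [mem_filter, mem_univ, true_and] at hT
  rw [← card_filter, ← card_filter_adj_ne_add_one hF hf hT.1 hT.2.1 hT.2.2, Nat.add_sub_cancel]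

theorem cast_card_filter_merge {α ι : Type*} [Fintype α] [DecidableEq ι] (f : α → ι) {p q : ι}
    (hpq : p ≠ q) :
    (#{a | (if f a = q then p else f a) = p} : ℝ) = #{a | f a = p} + #{a | f a = q} := by
  classical
  rw [← Nat.cast_add, ← card_union_of_disjoint, ← filter_or]
  · congr 2
    ext a
    grind
  · rw [disjoint_filter]
    grind

theorem cast_card_filter_merge_of_ne {α ι : Type*} [Fintype α] [DecidableEq ι] (f : α → ι)
    {p q r : ι} (hp : r ≠ p) (hq : r ≠ q) :
    (#{a | (if f a = q then p else f a) = r} : ℝ) = #{a | f a = r} := by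
  congr 2
  ext a
  grind

/-- The Dong–Ge formula for the number of spanning trees of a complete bipartite graph containing a
given forest, whose components are the fibres of `f`. -/
theorem treesContaining_completeBipartiteGraph {α β ι : Type*} [Fintype α] [Fintype β] [Nonempty α]
    [Nonempty β] [DecidableEq ι] (F : SimpleGraph (α ⊕ β)) (hFG : F ≤ completeBipartiteGraph α β)
    (hF : F.IsAcyclic) (f : α ⊕ β → ι) (hf : ∀ a b, f a = f b ↔ F.Reachable a b) :
    (treesContaining (completeBipartiteGraph α β) F : ℝ) =
      dongGe (univ.image f) (fun p ↦ #{a | f (.inl a) = p}) (fun p ↦ #{b | f (.inr b) = p})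
        (Fintype.card α) (Fintype.card β) := by
  have hx : (0 : ℝ) < Fintype.card α := by exact_mod_cast Fintype.card_pos
  have hy : (0 : ℝ) < Fintype.card β := by exact_mod_cast Fintype.card_pos
  induction hc : #(univ.image f) generalizing F f with
  | zero =>
    rw [card_eq_zero, image_eq_empty] at hc
    exact absurd hc univ_nonempty.ne_empty
  | succ c ih =>
    have hmem : ∀ v, f v ∈ univ.image f := fun v ↦ mem_image_of_mem f (mem_univ v)
    rcases Nat.eq_zero_or_pos c with rfl | hpos
    · rw [treesContaining_eq_one hFG (isTree_of_card_image_eq_one hF hf hc)]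
      obtain ⟨i, hi⟩ := card_eq_one.1 hc
      have hfi : ∀ v, f v = i := fun v ↦ mem_singleton.1 (hi ▸ hmem v)
      simp only [dongGe, hi, prod_singleton, sum_singleton, hfi, filter_true, card_univ,
        Nat.cast_one]
      field_simp
      ring
    · have hsum := sum_treesContaining_sup_edge hF hf
      have hA : ∀ h : ι → ℝ, ∑ a : α, h (f (.inl a)) =
          ∑ p ∈ univ.image f, (#{a | f (.inl a) = p} : ℝ) * h p := fun h ↦ by
        rw [← sum_fiberwise_of_maps_to' (t := univ.image f) fun a _ ↦ hmem (.inl a)]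
        simp
      have hB : ∀ h : ι → ℝ, ∑ b : β, h (f (.inr b)) =
          ∑ p ∈ univ.image f, (#{b | f (.inr b) = p} : ℝ) * h p := fun h ↦ by
        rw [← sum_fiberwise_of_maps_to' (t := univ.image f) fun b _ ↦ hmem (.inr b)]
        simp
      have hw : ∀ p ∈ univ.image f, (0 : ℝ) <
          (#{a | f (.inl a) = p} : ℝ) * Fintype.card β +
            (#{b | f (.inr b) = p} : ℝ) * Fintype.card α := by
        intro p hp
        obtain ⟨v, -, rfl⟩ := mem_image.1 hp
        rcases v with a | b
        · have : 0 < #{a' | f (.inl a') = f (.inl a)} := card_pos.2 ⟨a, by simp⟩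
          positivity
        · have : 0 < #{b' | f (.inr b') = f (.inr b)} := card_pos.2 ⟨b, by simp⟩
          positivity
      let A' : ι → ι → ι → ℝ := fun p q r ↦
        #{a | (if f (.inl a) = q then p else f (.inl a)) = r}
      let B' : ι → ι → ι → ℝ := fun p q r ↦
        #{b | (if f (.inr b) = q then p else f (.inr b)) = r}
      let g : ι → ι → ℝ := fun p q ↦
        dongGe ((univ.image f).erase q) (A' p q) (B' p q) (Fintype.card α) (Fintype.card β)
      have hg : ∀ a b, f (.inl a) ≠ f (.inr b) →
          (treesContaining (completeBipartiteGraph α β)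
            (F ⊔ SimpleGraph.edge (.inl a) (.inr b)) : ℝ) = g (f (.inl a)) (f (.inr b)) := by
        intro a b hab
        rw [ih _ (sup_le hFG ((SimpleGraph.edge_le_iff _).2 (.inr (by simp))))
          (hF.sup_edge_of_not_reachable fun h ↦ hab ((hf _ _).2 h)) _
          (reachable_sup_edge_iff hf (by simp))
          (by rw [image_merge hab, card_erase_of_mem (hmem _), hc]; rfl), image_merge hab]
      have halg := sum_sum_dongGe_merge hx hy hw (by simpa using (hA fun _ ↦ 1).symm)
        (by simpa using (hB fun _ ↦ 1).symm) g fun p _ q _ hpq ↦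
          ⟨A' p q, B' p q, cast_card_filter_merge _ hpq, cast_card_filter_merge _ hpq,
            fun r hp hq ↦ cast_card_filter_merge_of_ne _ hp hq,
            fun r hp hq ↦ cast_card_filter_merge_of_ne _ hp hq, rfl⟩
      simp only [← mul_sum] at halg
      rw [← hA fun p ↦ ∑ q ∈ univ.image f, (#{b | f (.inr b) = q} : ℝ) *
        if p = q then 0 else g p q] at halg
      simp only [← hB fun q ↦ if f (.inl _) = q then 0 else g (f (.inl _)) q] at halg
      have hcast : ∑ a : α, ∑ b : β, (if f (.inl a) = f (.inr b) then 0 else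
          g (f (.inl a)) (f (.inr b))) =
          ((#(univ.image f) : ℝ) - 1) * treesContaining (completeBipartiteGraph α β) F := by
        rw [hc] at hsum ⊢
        rw [Nat.cast_succ, add_sub_cancel_right, ← Nat.cast_mul]
        rw [Nat.add_sub_cancel] at hsum
        rw [← hsum]
        push_cast
        refine sum_congr rfl fun a _ ↦ sum_congr rfl fun b _ ↦ ?_
        split_ifs with hab
        · rfl
        · exact (hg a b hab).symm
      have hne : (#(univ.image f) : ℝ) - 1 ≠ 0 := by
        rw [hc, Nat.cast_succ, add_sub_cancel_right]
        positivity
      exact mul_left_cancel₀ hne (hcast.symm.trans halg)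

/-- Dong–Ge formula: for a spanning forest `F` of `K_{n_1,n_2}` with `c` components,
`τ_F(K_{n_1,n_2}) = (1/(n_1 n_2)) · (∏_p (n_{1p}n_2 + n_{2p}n_1)) ·
(1 − Σ_p n_{1p}n_{2p}/(n_{1p}n_2 + n_{2p}n_1))`. -/
theorem stmt_17 (n1 n2 : ℕ) (hn1 : 1 ≤ n1) (hn2 : 1 ≤ n2)
    (F : SimpleGraph (Fin n1 ⊕ Fin n2))
    (hFG : F ≤ completeBipartiteGraph (Fin n1) (Fin n2))
    (hF : F.IsAcyclic)
    (c : ℕ) (comp : Fin n1 ⊕ Fin n2 → Fin c)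
    (hcomp : ∀ u v, comp u = comp v ↔ F.Reachable u v)
    (hsurj : Function.Surjective comp) :
    ((Nat.card {T : SimpleGraph (Fin n1 ⊕ Fin n2) //
        F ≤ T ∧ T ≤ completeBipartiteGraph (Fin n1) (Fin n2) ∧ T.IsTree} : ℕ) : ℝ)
      = 1 / ((n1 : ℝ) * n2) *
          (∏ p, ((n1P comp p : ℝ) * n2 + (n2P comp p : ℝ) * n1)) *
          (1 - ∑ p, (n1P comp p : ℝ) * (n2P comp p : ℝ) /
            ((n1P comp p : ℝ) * n2 + (n2P comp p : ℝ) * n1)) := by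
  have : Nonempty (Fin n1) := ⟨⟨0, hn1⟩⟩
  have : Nonempty (Fin n2) := ⟨⟨0, hn2⟩⟩
  have h := treesContaining_completeBipartiteGraph F hFG hF comp hcomp
  rw [image_univ_of_surjective hsurj] at h
  simpa only [treesContaining, dongGe, Fintype.card_fin, n1P, n2P, Nat.card_eq_fintype_card,
    Fintype.card_subtype] using h
end
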